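/- Let c, m ∈ ℕ. For every (not necessarily differentially private) randomized algorithm A taking m data points of the parity-chooses-secret task and outputting a bit, there exists an instance — a string r ∈ {0,1}^c and bits s_{j,1},…,s_{j,m+1} for each j ∈ {0,1}^c — such that the probability that A outputs the bit s_r is at most 1/2, where the probability is over the m i.i.d. data points generated from the instance and A's coins. In particular, a trusted curator holding only m examples cannot solve the parity-chooses-secret task with success probability 3/4. -/

import Mathlib

open scoped ENNReal

/-- Two databases of size `m` are neighboring if they differ in at most one entry. -/
def Neighbor {X : Type*} {m : ℕ} (x x' : Fin m → X) : Prop :=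
  ∃ i : Fin m, ∀ j : Fin m, j ≠ i → x j = x' j

/-- The probability that a sample from `P` lands in the set `T`. -/
noncomputable def prOf {Y : Type*} (P : PMF Y) (T : Set Y) : ℝ≥0∞ :=
  P.toOuterMeasure T

/-- `ε`-differential privacy for a mechanism operating on databases of size `m`. -/
def DPAlg {X Y : Type*} {m : ℕ} (ε : ℝ) (A : (Fin m → X) → PMF Y) : Prop :=
  ∀ x x' : Fin m → X, Neighbor x x' → ∀ T : Set Y,
    prOf (A x) T ≤ ENNReal.ofReal (Real.exp ε) * prOf (A x') T

/-- `ε`-differential privacy for a local randomizer. -/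
def DPRand {X Y : Type*} (ε : ℝ) (R : X → PMF Y) : Prop :=
  ∀ x x' : X, ∀ T : Set Y,
    prOf (R x) T ≤ ENNReal.ofReal (Real.exp ε) * prOf (R x') T

/-- `m` i.i.d. samples from the distribution `D`. -/
noncomputable def iid {Z : Type*} (D : PMF Z) : (m : ℕ) → PMF (Fin m → Z)
  | 0 => PMF.pure (fun i => i.elim0)
  | m + 1 => (iid D m).bind fun f => D.bind fun z => PMF.pure (Fin.cons z f)

/-- Independent product of finitely many PMFs. -/
noncomputable def pmfPi : (n : ℕ) → {T : Fin n → Type} → (∀ i, PMF (T i)) → PMF (∀ i, T i)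
  | 0, _, _ => PMF.pure (fun i => i.elim0)
  | n + 1, T, P =>
      (P 0).bind fun t0 =>
        (@pmfPi n (fun i => T i.succ) (fun i => P i.succ)).bind fun ts =>
          PMF.pure (Fin.cons t0 ts)

/-- XOR of a finite family of bits. -/
def xorFold {I : Type*} [Fintype I] (f : I → Bool) : Bool :=
  decide ((Finset.univ.filter (fun i => f i = true)).card % 2 = 1)

/-- The parity function `Par_k(x) = ⊕ k_i x_i`. -/
def Par {c : ℕ} (k x : Fin c → Bool) : Bool := xorFold (fun i => k i && x i)

/-- Interpret a bit string as an integer in `{0, …, 2^b − 1}`. -/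
def bitsToNat {b : ℕ} (y : Fin b → Bool) : ℕ :=
  ∑ i : Fin b, if y i then 2 ^ (i : ℕ) else 0

/-- The threshold function `Thr_t(y) = 1` iff `y ≥ t`. -/
def Thr {b : ℕ} (t y : Fin b → Bool) : Bool := decide (bitsToNat t ≤ bitsToNat y)

/-- Generalization error of hypothesis `h` w.r.t. target `c` under distribution `D`. -/
noncomputable def errD {Z L : Type*} (D : PMF Z) (c h : Z → L) : ℝ≥0∞ :=
  prOf D {z | h z ≠ c z}

/-- `(α, β)`-PAC learning for the concept class `C` with sample complexity `m`:
for every concept in `C` and distribution `D` on the domain, when the `m` examples are drawn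
i.i.d. from `D` and labeled by the concept, with probability at least `1 − β` the output
hypothesis has generalization error at most `α`. -/
def PACLearner {Z L : Type*} {m : ℕ} (α β : ℝ) (C : Set (Z → L))
    (A : (Fin m → Z × L) → PMF (Z → L)) : Prop :=
  ∀ c ∈ C, ∀ D : PMF Z,
    ENNReal.ofReal (1 - β) ≤
      prOf ((iid D m).bind fun s => A (fun i => (s i, c (s i))))
        {h | errD D c h ≤ ENNReal.ofReal α}

/-- A data point of the parity-chooses-secret task: `(x, ⟨x,r⟩ mod 2, t, (s_{j,t})_j)`. -/
abbrev PCSPoint (c m : ℕ) : Type :=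
  (Fin c → Bool) × Bool × Fin (m + 1) × ((Fin c → Bool) → Bool)

/-- The data-point distribution of the parity-chooses-secret task. -/
noncomputable def pcsDist (c m : ℕ) (r : Fin c → Bool)
    (sh : (Fin c → Bool) → Fin (m + 1) → Bool) : PMF (PCSPoint c m) :=
  (PMF.uniformOfFintype (Fin c → Bool)).bind fun x =>
    (PMF.uniformOfFintype (Fin (m + 1))).map fun t => (x, Par r x, t, fun j => sh j t)

/-!
Fix `r` and give every secret the same vector `u` of `m + 1` shares. Conditioned on the values
`(x, t)` behind them, at most `m` data points reveal at most `m` coordinates of `u`, so flipping an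
unrevealed coordinate keeps the output distribution and negates the XOR of `u`. Averaged over a
uniform `u`, the output is therefore correct with probability exactly `1/2`, and some `u` does no
better than this average.
-/

theorem pmf_bool_apply_add_apply_not (p : PMF Bool) (b : Bool) : p b + p (!b) = 1 := by
  have total : p true + p false = 1 := by
    rw [← Fintype.sum_bool, ← tsum_fintype (L := .unconditional _), p.tsum_coe]
  cases b
  · rwa [Bool.not_false, add_comm]
  · exact total

section XorFold

variable {I : Type*} [Fintype I]

theorem xorFold_eq_decide_odd (u : I → Bool) : xorFold u = decide (Odd (∑ i, (u i).toNat)) := by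
  simp only [xorFold, Finset.card_filter, Nat.odd_iff, Bool.toNat, Bool.cond_eq_ite]

theorem xorFold_update_not [DecidableEq I] (u : I → Bool) (a : I) :
    xorFold (Function.update u a (!u a)) = !xorFold u := by
  have sum_update (b : Bool) : ∑ i, (Function.update u a b i).toNat =
      b.toNat + ∑ i ∈ Finset.univ \ {a}, (u i).toNat := by
    simp only [Function.apply_update (fun _ => Bool.toNat)]
    exact Finset.sum_update_of_mem (Finset.mem_univ a) _ _
  have sum_self := sum_update (u a)
  rw [Function.update_eq_self] at sum_self
  rw [xorFold_eq_decide_odd, xorFold_eq_decide_odd, sum_update, sum_self]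
  cases u a <;> simp [Nat.odd_add, ← Nat.not_odd_iff_even]

theorem sum_apply_xorFold_of_dependsOn [DecidableEq I] {B : (I → Bool) → PMF Bool} {a : I}
    (hB : DependsOn B {a}ᶜ) : ∑ u, B u (xorFold u) = ∑ _u : I → Bool, (1 / 2 : ℝ≥0∞) := by
  have flip_involutive : Function.Involutive fun u : I → Bool => Function.update u a (!u a) :=
    fun u => by simp
  have B_flip (u : I → Bool) : B (Function.update u a (!u a)) = B u :=
    hB fun i hi => Function.update_of_ne hi _ _
  have right_eq_wrong : ∑ u, B u (xorFold u) = ∑ u, B u (!xorFold u) := by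
    rw [← Equiv.sum_comp flip_involutive.toPerm]
    simp only [Function.Involutive.coe_toPerm, xorFold_update_not, B_flip]
  calc ∑ u, B u (xorFold u)
      = (∑ u, B u (xorFold u) + ∑ u, B u (!xorFold u)) / 2 := by
        rw [← right_eq_wrong, ENNReal.add_div, ENNReal.add_halves]
    _ = (∑ _u : I → Bool, 1) / 2 := by
        simp only [← Finset.sum_add_distrib, pmf_bool_apply_add_apply_not]
    _ = ∑ _u : I → Bool, (1 / 2 : ℝ≥0∞) := by
        simp only [div_eq_mul_inv, Finset.sum_mul]

theorem exists_bind_apply_xorFold_le_half {W : Type*} (p : PMF W)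
    {B : W → (I → Bool) → PMF Bool} (hB : ∀ w, ∃ a, DependsOn (B w) {a}ᶜ) :
    ∃ u, (p.bind fun w => B w u) (xorFold u) ≤ 1 / 2 := by
  classical
  have average : ∑ u, (p.bind fun w => B w u) (xorFold u) =
      ∑ _u : I → Bool, (1 / 2 : ℝ≥0∞) :=
    calc ∑ u, (p.bind fun w => B w u) (xorFold u)
        = ∑' w, p w * ∑ u, B w u (xorFold u) := by
          simp only [PMF.bind_apply, Finset.mul_sum]
          exact (Summable.tsum_finsetSum fun _ _ => ENNReal.summable).symm
      _ = ∑' w, p w * ∑ _u : I → Bool, (1 / 2 : ℝ≥0∞) :=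
          tsum_congr fun w => by rw [sum_apply_xorFold_of_dependsOn (hB w).choose_spec]
      _ = ∑ _u : I → Bool, (1 / 2 : ℝ≥0∞) := by
          rw [ENNReal.tsum_mul_right, p.tsum_coe, one_mul]
  obtain ⟨u, -, hu⟩ := ENNReal.exists_le_of_sum_le Finset.univ_nonempty average.le
  exact ⟨u, hu⟩

end XorFold

theorem iid_map {Y Z : Type*} (D : PMF Y) (g : Y → Z) (n : ℕ) :
    iid (D.map g) n = (iid D n).map (g ∘ ·) := by
  induction n with
  | zero =>
    simp only [iid, PMF.pure_map]
    exact congrArg PMF.pure (Subsingleton.elim _ _)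
  | succ n ih =>
    simp only [iid, ih, PMF.bind_map, PMF.map_bind, PMF.pure_map, Fin.comp_cons]
    rfl

section ParityChoosesSecret

/-- The distribution of the instance-independent part `(x, t)` of a data point, from
which the rest of the point is a function of the instance. -/
noncomputable def pcsSeed (c m : ℕ) : PMF ((Fin c → Bool) × Fin (m + 1)) :=
  (PMF.uniformOfFintype (Fin c → Bool)).bind fun x =>
    (PMF.uniformOfFintype (Fin (m + 1))).map fun t => (x, t)

variable {c m : ℕ}

/-- The data point that the instance with string `r` and shares `sh` generates from the
seed `(x, t)`. -/
def pcsPoint (r : Fin c → Bool) (sh : (Fin c → Bool) → Fin (m + 1) → Bool)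
    (seed : (Fin c → Bool) × Fin (m + 1)) : PCSPoint c m :=
  (seed.1, Par r seed.1, seed.2, fun j => sh j seed.2)

theorem pcsDist_eq_map_pcsSeed (r : Fin c → Bool)
    (sh : (Fin c → Bool) → Fin (m + 1) → Bool) :
    pcsDist c m r sh = (pcsSeed c m).map (pcsPoint r sh) := by
  simp only [pcsDist, pcsSeed, PMF.map_bind, PMF.map_comp, Function.comp_def, pcsPoint]

theorem iid_pcsDist_bind {Y : Type*} {n : ℕ} (A : (Fin n → PCSPoint c m) → PMF Y)
    (r : Fin c → Bool) (sh : (Fin c → Bool) → Fin (m + 1) → Bool) :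
    (iid (pcsDist c m r sh) n).bind A =
      (iid (pcsSeed c m) n).bind fun w => A (pcsPoint r sh ∘ w) := by
  rw [pcsDist_eq_map_pcsSeed, iid_map, PMF.bind_map]
  rfl

theorem dependsOn_pcsPoint_comp {n : ℕ} (r : Fin c → Bool)
    (w : Fin n → (Fin c → Bool) × Fin (m + 1)) :
    DependsOn (fun u : Fin (m + 1) → Bool => pcsPoint r (fun _ => u) ∘ w)
      (Set.range fun i => (w i).2) := by
  intro u v huv
  funext i
  simp only [Function.comp_apply, pcsPoint, huv (w i).2 ⟨i, rfl⟩]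

end ParityChoosesSecret

theorem stmt_15_general {c m n : ℕ} (hn : n ≤ m) (A : (Fin n → PCSPoint c m) → PMF Bool)
    (r : Fin c → Bool) : ∃ sh : (Fin c → Bool) → Fin (m + 1) → Bool,
      prOf ((iid (pcsDist c m r sh) n).bind A) {xorFold (sh r)} ≤ 1 / 2 := by
  have ignores_share (w : Fin n → (Fin c → Bool) × Fin (m + 1)) :
      ∃ t, DependsOn (fun u => A (pcsPoint r (fun _ => u) ∘ w)) {t}ᶜ := by
    obtain ⟨t, ht⟩ : ∃ t, t ∉ Set.range fun i => (w i).2 := by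
      by_contra! hsurj
      have := Fintype.card_le_of_surjective (fun i => (w i).2) hsurj
      simp only [Fintype.card_fin] at this
      lia
    exact ⟨t, fun u v huv => congrArg A <|
      (dependsOn_pcsPoint_comp r w).mono (Set.subset_compl_singleton_iff.2 ht) huv⟩
  obtain ⟨u, hu⟩ := exists_bind_apply_xorFold_le_half (iid (pcsSeed c m) n) ignores_share
  refine ⟨fun _ => u, ?_⟩
  rwa [prOf, PMF.toOuterMeasure_apply_singleton, iid_pcsDist_bind]

/-- every (not necessarily private) randomized algorithm taking `m` data points
of the parity-chooses-secret task and outputting a bit has an instance on which it outputs the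
secret bit `s_r` with probability at most `1/2`. In particular, a trusted curator holding only
`m` examples cannot solve the task with success probability `3/4`. -/
theorem stmt_15 (c m : ℕ)
    (A : (Fin m → PCSPoint c m) → PMF Bool) :
    (∃ (r : Fin c → Bool) (sh : (Fin c → Bool) → Fin (m + 1) → Bool),
      prOf ((iid (pcsDist c m r sh) m).bind A) {xorFold (sh r)} ≤ (1 / 2 : ℝ≥0∞)) ∧
    ¬ ∀ (r : Fin c → Bool) (sh : (Fin c → Bool) → Fin (m + 1) → Bool),
      ENNReal.ofReal (3 / 4 : ℝ) ≤
        prOf ((iid (pcsDist c m r sh) m).bind A) {xorFold (sh r)} := by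
  obtain ⟨sh, hsh⟩ := stmt_15_general le_rfl A fun _ => false
  refine ⟨⟨_, sh, hsh⟩, fun solves => ((solves _ sh).trans hsh).not_gt ?_⟩
  rw [ENNReal.lt_ofReal_iff_toReal_lt (by simp)]
  norm_num
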